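/- Let ω : ℝ³ → ℝ³ be a smooth, compactly supported, divergence-free vector field (∇ · ω = 0), and define V : ℝ³ → ℝ³ by the Biot–Savart integral V(x) = −(1/4π) ∫_{ℝ³} ((x − x′) × ω(x′))/‖x − x′‖³ dx′. Then V is smooth, ∇ · V = 0 on ℝ³, and ∇ × V = ω on ℝ³. -/

import Mathlib

open MeasureTheory Real

/-- The standard basis vectors of `ℝ³`. -/
noncomputable def basis3 (i : Fin 3) : EuclideanSpace ℝ (Fin 3) :=
  EuclideanSpace.single i 1

/-- The cross product on `ℝ³`. -/
noncomputable def cross3 (a b : EuclideanSpace ℝ (Fin 3)) : EuclideanSpace ℝ (Fin 3) :=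
  (WithLp.equiv 2 (Fin 3 → ℝ)).symm
    ![a 1 * b 2 - a 2 * b 1, a 2 * b 0 - a 0 * b 2, a 0 * b 1 - a 1 * b 0]

/-- The divergence `∇ · V` of a vector field on `ℝ³`. -/
noncomputable def div3 (V : EuclideanSpace ℝ (Fin 3) → EuclideanSpace ℝ (Fin 3))
    (x : EuclideanSpace ℝ (Fin 3)) : ℝ :=
  ∑ i : Fin 3, fderiv ℝ V x (basis3 i) i

/-- The curl `∇ × V` of a vector field on `ℝ³`. -/
noncomputable def curl3 (V : EuclideanSpace ℝ (Fin 3) → EuclideanSpace ℝ (Fin 3))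
    (x : EuclideanSpace ℝ (Fin 3)) : EuclideanSpace ℝ (Fin 3) :=
  (WithLp.equiv 2 (Fin 3 → ℝ)).symm
    ![fderiv ℝ V x (basis3 1) 2 - fderiv ℝ V x (basis3 2) 1,
      fderiv ℝ V x (basis3 2) 0 - fderiv ℝ V x (basis3 0) 2,
      fderiv ℝ V x (basis3 0) 1 - fderiv ℝ V x (basis3 1) 0]

/-! `V` is a multiple of the convolution, through the cross product, of the field `K y = y / ‖y‖³`
with `ω`, so its derivative is obtained by differentiating `ω` inside the integral. For a constant
vector `a` one has `∇ × (a × ω) = (∇ · ω) a - (a · ∇) ω` and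
`∇ · (a × ω) = -∑ k, ((eₖ × a) · ∇) ωₖ`. With `a = K y`, the derivative along `K y` is radial and
integrates in polar coordinates to `4π` times the value of `ω` at the pole, while the derivatives
along `eₖ × K y` are tangent to the spheres and integrate to zero because a radial weight is
invariant under rotations. -/

open Metric Module Set
open scoped Convolution

/-! ### The field `y / ‖y‖ ^ d` -/

/-- The field `y / ‖y‖ ^ d` in dimension `d`, proportional to the gradient of the fundamental
solution of the Laplacian. It vanishes at the origin. -/
noncomputable def newtonField {E : Type*} [NormedAddCommGroup E] [NormedSpace ℝ E] (y : E) : E :=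
  (‖y‖ ^ finrank ℝ E)⁻¹ • y

section Haar

variable {E F : Type*} [NormedAddCommGroup E] [NormedSpace ℝ E] [FiniteDimensional ℝ E]
  [MeasurableSpace E] [BorelSpace E] [NormedAddCommGroup F] [NormedSpace ℝ F]
  (μ : Measure E)

theorem measurable_newtonField : Measurable (newtonField : E → E) := by
  unfold newtonField
  fun_prop

variable [μ.IsAddHaarMeasure] [Nontrivial E]

theorem locallyIntegrable_newtonField : LocallyIntegrable (newtonField : E → E) μ := by
  intro x
  refine ⟨ball 0 (‖x‖ + 1), isOpen_ball.mem_nhds (by simp), ?_⟩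
  have hnorm : IntegrableOn (fun y : E => (‖y‖ ^ finrank ℝ E)⁻¹ * ‖y‖) (ball 0 (‖x‖ + 1)) μ := by
    rw [integrableOn_fun_norm_addHaar μ (f := fun r => (r ^ finrank ℝ E)⁻¹ * r)]
    refine (integrableOn_const (C := (1 : ℝ)) (by simp)).congr_fun (fun r hr => ?_)
      measurableSet_Ioo
    have hr : r ≠ 0 := hr.1.ne'
    rw [smul_eq_mul, ← pow_sub_one_mul (finrank_pos (R := ℝ) (M := E)).ne' r]
    field_simp
  refine hnorm.mono' measurable_newtonField.aestronglyMeasurable (.of_forall fun y => ?_)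
  simp [newtonField, norm_smul]

theorem integral_eq_integral_sphere_integral_Ioi {f : E → F} (hf : Integrable f μ) :
    ∫ y, f y ∂μ = ∫ s : sphere (0 : E) 1,
      (∫ r in Ioi (0 : ℝ), r ^ (finrank ℝ E - 1) • f (r • (s : E))) ∂μ.toSphere := by
  let g : sphere (0 : E) 1 × Ioi (0 : ℝ) → F := fun p => f ((p.2 : ℝ) • (p.1 : E))
  have hpres := μ.measurePreserving_homeomorphUnitSphereProd
  have hemb := (homeomorphUnitSphereProd E).measurableEmbedding
  have hg : g ∘ homeomorphUnitSphereProd E = fun x : ({0}ᶜ : Set E) => f x := funext fun x =>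
    congrArg (fun z : ({0}ᶜ : Set E) => f z) ((homeomorphUnitSphereProd E).symm_apply_apply x)
  have hg_int : Integrable g (μ.toSphere.prod (.volumeIoiPow (finrank ℝ E - 1))) := by
    rw [← hpres.integrable_comp_emb hemb, hg]
    exact (integrableOn_iff_comap_subtypeVal (measurableSet_singleton 0).compl).1 hf.integrableOn
  calc ∫ y, f y ∂μ
      = ∫ x : ({0}ᶜ : Set E), f x ∂μ.comap (↑) := by
        rw [integral_subtype_comap (measurableSet_singleton _).compl f, restrict_compl_singleton]
    _ = ∫ p, g p ∂μ.toSphere.prod (.volumeIoiPow (finrank ℝ E - 1)) := by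
        rw [← hpres.integral_comp hemb, ← hg]
        rfl
    _ = ∫ s, ∫ r, g (s, r) ∂.volumeIoiPow (finrank ℝ E - 1) ∂μ.toSphere :=
        integral_prod g hg_int
    _ = _ := by
        congr with s
        simp only [Measure.volumeIoiPow, ENNReal.ofReal, g]
        rw [integral_withDensity_eq_integral_smul
            (measurable_subtype_coe.pow_const _).real_toNNReal]
        refine (integral_subtype_comap measurableSet_Ioi fun r : ℝ =>
          (r ^ (finrank ℝ E - 1)).toNNReal • f (r • (s : E))).trans
          (setIntegral_congr_fun measurableSet_Ioi fun r hr => ?_)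
        rw [NNReal.smul_def, Real.coe_toNNReal _ (pow_nonneg (le_of_lt hr) _)]

end Haar

section CompactSupport

variable {E F G : Type*} [NormedAddCommGroup E] [NormedSpace ℝ E]
  [NormedAddCommGroup F] [NormedSpace ℝ F] [NormedAddCommGroup G] [NormedSpace ℝ G]

theorem integrable_clm_apply_of_hasCompactSupport {X : Type*} [TopologicalSpace X] [T2Space X]
    [SecondCountableTopology X] [MeasurableSpace X] [OpensMeasurableSpace X] {μ : Measure X}
    {k : X → F} (hk : LocallyIntegrable k μ) {T : X → F →L[ℝ] G} (hT : Continuous T)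
    (hTs : HasCompactSupport T) : Integrable (fun y => T y (k y)) μ := by
  have hbound : Integrable (fun y => ‖T y‖ • k y) μ :=
    hk.integrable_smul_left_of_hasCompactSupport hT.norm hTs.norm
  refine hbound.norm.mono'
    ((ContinuousLinearMap.id ℝ (F →L[ℝ] G)).aestronglyMeasurable_comp₂
      hT.aestronglyMeasurable hk.aestronglyMeasurable) (.of_forall fun y => ?_)
  simpa [norm_smul] using (T y).le_opNorm (k y)

variable {h : E → F}

theorem integral_Ioi_fderiv_smul [CompleteSpace F] (hh : ContDiff ℝ 1 h)
    (hs : HasCompactSupport h) {v : E} (hv : v ≠ 0) :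
    ∫ r in Ioi (0 : ℝ), fderiv ℝ h (r • v) v = -h 0 := by
  have hderiv (r : ℝ) : deriv (fun t : ℝ => h (t • v)) r = fderiv ℝ h (r • v) v := by
    have hline : HasDerivAt (fun t : ℝ => t • v) v r := by
      simpa using (hasDerivAt_id r).smul_const v
    exact ((hh.differentiable one_ne_zero _).hasFDerivAt.comp_hasDerivAt r hline).deriv
  have hray := (hs.comp_isClosedEmbedding (isClosedEmbedding_smul_left hv)).integral_Ioi_deriv_eq
    (f := fun t : ℝ => h (t • v)) (hh.comp (by fun_prop)) 0
  simpa only [hderiv, zero_smul] using hray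

/-- In polar coordinates the Jacobian `r ^ (d - 1)` turns `newtonField` into the radial unit
vector, and the integral along each ray is given by the fundamental theorem of calculus. -/
theorem integral_fderiv_newtonField [CompleteSpace F] [FiniteDimensional ℝ E] [Nontrivial E]
    [MeasurableSpace E] [BorelSpace E] (μ : Measure E) [μ.IsAddHaarMeasure]
    (hh : ContDiff ℝ 1 h) (hs : HasCompactSupport h) :
    ∫ y, fderiv ℝ h y (newtonField y) ∂μ = -((finrank ℝ E * μ.real (ball 0 1)) • h 0) := by
  have hint : Integrable (fun y => fderiv ℝ h y (newtonField y)) μ :=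
    integrable_clm_apply_of_hasCompactSupport (locallyIntegrable_newtonField μ)
      (hh.continuous_fderiv one_ne_zero) (hs.fderiv ℝ)
  have hray (s : sphere (0 : E) 1) : ∫ r in Ioi (0 : ℝ),
      r ^ (finrank ℝ E - 1) • fderiv ℝ h (r • (s : E)) (newtonField (r • (s : E))) = -h 0 := by
    rw [← integral_Ioi_fderiv_smul hh hs (ne_zero_of_mem_unit_sphere s)]
    refine setIntegral_congr_fun measurableSet_Ioi fun r (hr : 0 < r) => ?_
    have hpolar : r ^ (finrank ℝ E - 1) • newtonField (r • (s : E)) = s := by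
      rw [newtonField, norm_smul, norm_eq_of_mem_sphere, mul_one, Real.norm_of_nonneg hr.le,
        ← pow_sub_one_mul (finrank_pos (R := ℝ) (M := E)).ne' r, smul_smul, smul_smul]
      convert one_smul ℝ (s : E)
      field_simp
    rw [← map_smul, hpolar]
  simp only [integral_eq_integral_sphere_integral_Ioi μ hint, hray, integral_const,
    Measure.toSphere_real_apply_univ, smul_neg]

theorem fderiv_comp_const_sub (h : E → F) (x y : E) :
    fderiv ℝ (fun z => h (x - z)) y = -fderiv ℝ h (x - y) := by
  simpa [fderiv_comp_add_left, sub_eq_add_neg] using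
    fderiv_comp_smul (𝕜 := ℝ) (f := fun z => h (x + z)) (x := y) (-1)

theorem apply_fderiv_convolution [MeasurableSpace E] [BorelSpace E] {μ : Measure E} [SFinite μ]
    [μ.IsAddLeftInvariant] {F' H : Type*} [NormedAddCommGroup F'] [NormedSpace ℝ F']
    [NormedAddCommGroup H] [NormedSpace ℝ H] [CompleteSpace G] [CompleteSpace H]
    {k : E → F'} (hk : LocallyIntegrable k μ) (hh : ContDiff ℝ 1 h) (hs : HasCompactSupport h)
    (L : F' →L[ℝ] F →L[ℝ] G) (P : (E →L[ℝ] G) →L[ℝ] H) (x : E) :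
    P (fderiv ℝ (k ⋆[L, μ] h) x) = ∫ y, P ((L (k y)).comp (fderiv ℝ h (x - y))) ∂μ := by
  rw [(hs.hasFDerivAt_convolution_right L hk hh x).fderiv]
  exact (P.integral_comp_comm ((hs.fderiv ℝ).convolutionExists_right (L.precompR E) hk
    (hh.continuous_fderiv one_ne_zero) x)).symm

end CompactSupport

/-! ### Rotation invariance -/

section Rotation

variable {E F : Type*} [NormedAddCommGroup E] [NormedAddCommGroup F] [NormedSpace ℝ F]

/-- Subtracting `h 0` near the origin makes `h` integrable against weights as singular as
`‖y‖ ^ (-d)`. -/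
theorem integrable_smul_sub_indicator_closedBall [NormedSpace ℝ E] [FiniteDimensional ℝ E]
    [MeasurableSpace E] [BorelSpace E] {μ : Measure E} {w : E → ℝ} (hw : AEStronglyMeasurable w μ)
    (hloc : LocallyIntegrable (fun y => w y • y) μ) {h : E → F} {C : NNReal}
    (hh : LipschitzWith C h) {R : ℝ} (hR : tsupport h ⊆ closedBall 0 R) :
    Integrable (fun y => w y • (h y - (closedBall 0 R).indicator (fun _ => h 0) y)) μ := by
  have hbound : Integrable ((closedBall 0 R).indicator fun y => C * ‖w y • y‖) μ :=
    (integrable_indicator_iff measurableSet_closedBall).2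
      ((hloc.integrableOn_isCompact (isCompact_closedBall 0 R)).norm.const_mul _)
  refine hbound.mono' (hw.smul (hh.continuous.aestronglyMeasurable.sub
    (aestronglyMeasurable_const.indicator measurableSet_closedBall))) (.of_forall fun y => ?_)
  by_cases hy : y ∈ closedBall 0 R
  · simp only [indicator_of_mem hy, norm_smul, mul_left_comm (C : ℝ)]
    gcongr
    simpa using hh.norm_sub_le y 0
  · simp [hy, image_eq_zero_of_notMem_tsupport fun hmem => hy (hR hmem)]

theorem norm_smul_fderiv_apply_clm_le_indicator [NormedSpace ℝ E] {h : E → F}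
    {C : ℝ} (hC : ∀ y, ‖fderiv ℝ h y‖ ≤ C) {R : ℝ} (hR : tsupport h ⊆ closedBall 0 R)
    (A : E →L[ℝ] E) (w : E → ℝ) (y : E) : ‖w y • fderiv ℝ h y (A y)‖ ≤
      (closedBall 0 R).indicator (fun y => C * ‖A‖ * ‖w y • y‖) y := by
  by_cases hy : y ∈ closedBall 0 R
  · rw [indicator_of_mem hy, mul_assoc, ← map_smul, ← map_smul]
    exact (fderiv ℝ h y).le_of_opNorm_le_of_le (hC y) (A.le_opNorm _)
  · simp [hy, fderiv_of_notMem_tsupport ℝ fun hmem => hy (hR hmem)]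

theorem integral_eq_zero_of_hasDerivAt_comp_measurePreserving {X : Type*} [MeasurableSpace X]
    {μ : Measure X} {U : ℝ → X ≃ᵐ X} (hU : ∀ t, MeasurePreserving (U t) μ μ) {φ ψ : X → F}
    {bound : X → ℝ} (hφ : Integrable φ μ) (hψ : AEStronglyMeasurable ψ μ)
    (hbound : Integrable bound μ) (hψ_le : ∀ t x, ‖ψ (U t x)‖ ≤ bound x)
    (hderiv : ∀ t x, HasDerivAt (fun s => φ (U s x)) (ψ (U t x)) t) :
    ∫ x, ψ x ∂μ = 0 := by
  have hφU (t : ℝ) : Integrable (fun x => φ (U t x)) μ := (hU t).integrable_comp_of_integrable hφ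
  have hderiv_integral : HasDerivAt (fun t => ∫ x, φ (U t x) ∂μ) (∫ x, ψ (U 0 x) ∂μ) 0 :=
    (hasDerivAt_integral_of_dominated_loc_of_deriv_le Filter.univ_mem
      (.of_forall fun t => (hφU t).aestronglyMeasurable) (hφU 0)
      (hψ.comp_measurePreserving (hU 0)) (.of_forall fun x t _ => hψ_le t x) hbound
      (.of_forall fun x t _ => hderiv t x)).2
  simp only [(hU _).integral_comp'] at hderiv_integral
  exact hderiv_integral.unique (hasDerivAt_const _ _)

variable [InnerProductSpace ℝ E]

theorem exists_linearIsometryEquiv_hasDerivAt_of_mem_skewAdjoint [CompleteSpace E]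
    {A : E →L[ℝ] E} (hA : A ∈ skewAdjoint (E →L[ℝ] E)) :
    ∃ U : ℝ → E ≃ₗᵢ[ℝ] E, ∀ t y, HasDerivAt (fun s => U s y) (A (U t y)) t := by
  let _ := NormedAlgebra.restrictScalars ℚ ℝ (E →L[ℝ] E)
  have hunitary (t : ℝ) : NormedSpace.exp (t • A) ∈ unitary (E →L[ℝ] E) :=
    NormedSpace.exp_mem_unitary_of_mem_skewAdjoint (skewAdjoint.smul_mem t hA)
  refine ⟨fun t => Unitary.linearIsometryEquiv ⟨_, hunitary t⟩, fun t y => ?_⟩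
  exact (((hasDerivAt_exp_smul_const' A t).clm_apply (hasDerivAt_const t y)).congr_deriv
    (by rw [map_zero, add_zero]) :)

variable [FiniteDimensional ℝ E] [MeasurableSpace E] [BorelSpace E]

/-- Integrate along the flow of `A`, whose isometries preserve both the measure and the weight. -/
theorem integral_smul_fderiv_apply_skewAdjoint_eq_zero {f : ℝ → ℝ} (hf : Measurable f)
    (hloc : LocallyIntegrable (fun y : E => f ‖y‖ • y)) {h : E → F} (hh : ContDiff ℝ 1 h)
    (hs : HasCompactSupport h) {A : E →L[ℝ] E} (hA : A ∈ skewAdjoint (E →L[ℝ] E)) :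
    ∫ y, f ‖y‖ • fderiv ℝ h y (A y) = 0 := by
  obtain ⟨U, hU⟩ := exists_linearIsometryEquiv_hasDerivAt_of_mem_skewAdjoint hA
  obtain ⟨R, hR⟩ := hs.isCompact.isBounded.subset_closedBall (0 : E)
  obtain ⟨K, hK⟩ := hh.lipschitzWith_of_hasCompactSupport hs one_ne_zero
  obtain ⟨C, hC⟩ := (hs.fderiv ℝ).exists_bound_of_continuous (hh.continuous_fderiv one_ne_zero)
  have hf_norm : AEStronglyMeasurable (fun y : E => f ‖y‖) :=
    (hf.comp measurable_norm).aestronglyMeasurable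
  let φ (y : E) : F := f ‖y‖ • (h y - (closedBall 0 R).indicator (fun _ => h 0) y)
  let bound : E → ℝ := (closedBall 0 R).indicator fun y => C * ‖A‖ * ‖f ‖y‖ • y‖
  have hφ : Integrable φ := integrable_smul_sub_indicator_closedBall hf_norm hloc hK hR
  have hbound : Integrable bound := (integrable_indicator_iff measurableSet_closedBall).2
    ((hloc.integrableOn_isCompact (isCompact_closedBall 0 R)).norm.const_mul _)
  refine integral_eq_zero_of_hasDerivAt_comp_measurePreserving
    (U := fun t => (U t).toMeasurableEquiv) (φ := φ) (bound := bound)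
    (fun t => (U t).measurePreserving) hφ
    (hf_norm.smul (by have := hh.continuous_fderiv one_ne_zero; fun_prop)) hbound
    (fun t y => ?_) fun t y => ?_
  · simpa [bound, indicator, norm_smul] using
      norm_smul_fderiv_apply_clm_le_indicator hC hR A (fun y => f ‖y‖) (U t y)
  · have hφU (s : ℝ) : φ (U s y) =
        f ‖y‖ • (h (U s y) - (closedBall 0 R).indicator (fun _ => h 0) y) := by
      simp [φ, indicator]
    suffices HasDerivAt (fun s => φ (U s y)) (f ‖y‖ • fderiv ℝ h (U t y) (A (U t y))) t by simpa
    simp only [hφU]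
    exact (((hh.differentiable one_ne_zero _).hasFDerivAt.comp_hasDerivAt t (hU t y)).sub_const
      _).const_smul _

theorem integral_fderiv_skewAdjoint_newtonField_eq_zero [Nontrivial E] {h : E → F}
    (hh : ContDiff ℝ 1 h) (hs : HasCompactSupport h) {A : E →L[ℝ] E}
    (hA : A ∈ skewAdjoint (E →L[ℝ] E)) : ∫ y, fderiv ℝ h y (A (newtonField y)) = 0 := by
  simpa only [newtonField, map_smul] using integral_smul_fderiv_apply_skewAdjoint_eq_zero
    (f := fun r => (r ^ finrank ℝ E)⁻¹) (by fun_prop) (locallyIntegrable_newtonField volume)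
    hh hs hA

end Rotation

/-! ### Divergence and curl on `ℝ³` -/

section CrossProduct

local notation "ℝ³" => EuclideanSpace ℝ (Fin 3)

/-- The cross product as a continuous bilinear map, so that it can be used in convolutions. -/
noncomputable def crossL : ℝ³ →L[ℝ] ℝ³ →L[ℝ] ℝ³ :=
  (LinearMap.mk₂ ℝ cross3
    (fun a a' b => by ext i; fin_cases i <;> simp [cross3] <;> ring)
    (fun c a b => by ext i; fin_cases i <;> simp [cross3] <;> ring)
    (fun a b b' => by ext i; fin_cases i <;> simp [cross3] <;> ring)
    (fun c a b => by ext i; fin_cases i <;> simp [cross3] <;> ring)).toContinuousBilinearMap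

theorem crossL_apply (a b : ℝ³) : crossL a b = cross3 a b := rfl

/-- The divergence as a linear function of the derivative, that is, the trace. -/
noncomputable def divL : (ℝ³ →L[ℝ] ℝ³) →L[ℝ] ℝ :=
  ∑ i, (EuclideanSpace.proj i).comp (ContinuousLinearMap.apply ℝ ℝ³ (basis3 i))

/-- The curl as a linear function of the derivative. -/
noncomputable def curlL : (ℝ³ →L[ℝ] ℝ³) →L[ℝ] ℝ³ :=
  ∑ i, (crossL (basis3 i)).comp (ContinuousLinearMap.apply ℝ ℝ³ (basis3 i))

theorem divL_fderiv (V : ℝ³ → ℝ³) (x : ℝ³) : divL (fderiv ℝ V x) = div3 V x := by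
  simp [divL, div3]

theorem curlL_fderiv (V : ℝ³ → ℝ³) (x : ℝ³) : curlL (fderiv ℝ V x) = curl3 V x := by
  ext i
  fin_cases i <;> simp [curlL, curl3, crossL_apply, cross3, basis3, Fin.sum_univ_three] <;> ring

theorem clm_apply_eq_sum_smul_basis3 {F : Type*} [NormedAddCommGroup F] [NormedSpace ℝ F]
    (T : ℝ³ →L[ℝ] F) (a : ℝ³) : T a = ∑ i, a i • T (basis3 i) := by
  simpa [basis3] using congrArg T ((EuclideanSpace.basisFun (Fin 3) ℝ).sum_repr a).symm

theorem divL_crossL_comp (a : ℝ³) (T : ℝ³ →L[ℝ] ℝ³) :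
    divL ((crossL a).comp T) = -∑ k, T (crossL (basis3 k) a) k := by
  simp only [clm_apply_eq_sum_smul_basis3 T (crossL _ a)]
  simp [divL, crossL_apply, cross3, basis3, Fin.sum_univ_three]
  ring

theorem curlL_crossL_comp (a : ℝ³) (T : ℝ³ →L[ℝ] ℝ³) :
    curlL ((crossL a).comp T) = divL T • a - T a := by
  rw [clm_apply_eq_sum_smul_basis3 T a]
  ext i
  fin_cases i <;> simp [curlL, divL, crossL_apply, cross3, basis3, Fin.sum_univ_three] <;> ring

theorem crossL_mem_skewAdjoint (a : ℝ³) : crossL a ∈ skewAdjoint (ℝ³ →L[ℝ] ℝ³) := by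
  rw [skewAdjoint.mem_iff, ContinuousLinearMap.star_eq_adjoint, eq_comm,
    ContinuousLinearMap.eq_adjoint_iff]
  intro b c
  simp [crossL_apply, cross3, PiLp.inner_apply, Fin.sum_univ_three]
  ring

theorem three_mul_volume_real_ball_one : 3 * volume.real (ball (0 : ℝ³) 1) = 4 * π := by
  rw [measureReal_def, EuclideanSpace.volume_ball_fin_three, ENNReal.toReal_mul,
    ENNReal.toReal_pow, ENNReal.toReal_ofReal zero_le_one, ENNReal.toReal_ofReal (by positivity)]
  ring

/-! ### The Biot–Savart field -/

/-- The Biot–Savart field of `ω`, written as a convolution. -/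
noncomputable def biotSavart (ω : ℝ³ → ℝ³) : ℝ³ → ℝ³ :=
  (-(4 * π)⁻¹ : ℝ) • (newtonField ⋆[crossL] ω)

theorem biotSavart_apply (ω : ℝ³ → ℝ³) (x : ℝ³) : biotSavart ω x =
    (-(4 * π)⁻¹ : ℝ) • ∫ x', (‖x - x'‖ ^ 3)⁻¹ • cross3 (x - x') (ω x') := by
  simp only [biotSavart, Pi.smul_apply, convolution_eq_swap, newtonField,
    finrank_euclideanSpace_fin, map_smul, smul_apply, crossL_apply]

variable {ω : ℝ³ → ℝ³}

theorem contDiff_biotSavart {n : ℕ∞} (hω : ContDiff ℝ n ω) (hs : HasCompactSupport ω) :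
    ContDiff ℝ n (biotSavart ω) :=
  contDiff_const.smul
    (hs.contDiff_convolution_right crossL (locallyIntegrable_newtonField volume) hω)

theorem clm_apply_fderiv_biotSavart {H : Type*} [NormedAddCommGroup H] [NormedSpace ℝ H]
    [CompleteSpace H] (hω : ContDiff ℝ 1 ω) (hs : HasCompactSupport ω)
    (P : (ℝ³ →L[ℝ] ℝ³) →L[ℝ] H) (x : ℝ³) : P (fderiv ℝ (biotSavart ω) x) =
      (-(4 * π)⁻¹ : ℝ) • ∫ y, P ((crossL (newtonField y)).comp (fderiv ℝ ω (x - y))) := by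
  rw [biotSavart, fderiv_const_smul_field, Pi.smul_apply, map_smul,
    apply_fderiv_convolution (locallyIntegrable_newtonField volume) hω hs]

theorem integral_fderiv_sub_crossL_newtonField_eq_zero (hω : ContDiff ℝ 1 ω)
    (hs : HasCompactSupport ω) (a x : ℝ³) :
    ∫ y, fderiv ℝ ω (x - y) (crossL a (newtonField y)) = 0 := by
  simpa [fderiv_comp_const_sub, integral_neg] using
    integral_fderiv_skewAdjoint_newtonField_eq_zero (h := fun y => ω (x - y))
      (hω.comp (contDiff_const.sub contDiff_id)) (hs.comp_homeomorph (Homeomorph.subLeft x))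
      (crossL_mem_skewAdjoint a)

theorem integral_fderiv_sub_newtonField (hω : ContDiff ℝ 1 ω) (hs : HasCompactSupport ω)
    (x : ℝ³) : ∫ y, fderiv ℝ ω (x - y) (newtonField y) = (4 * π) • ω x := by
  simpa [fderiv_comp_const_sub, integral_neg, three_mul_volume_real_ball_one] using
    integral_fderiv_newtonField volume (h := fun y => ω (x - y))
      (hω.comp (contDiff_const.sub contDiff_id)) (hs.comp_homeomorph (Homeomorph.subLeft x))

theorem div3_biotSavart (hω : ContDiff ℝ 1 ω) (hs : HasCompactSupport ω) (x : ℝ³) :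
    div3 (biotSavart ω) x = 0 := by
  have hDω : Continuous fun y => fderiv ℝ ω (x - y) :=
    (hω.continuous_fderiv one_ne_zero).comp (continuous_const.sub continuous_id)
  have hDωs : HasCompactSupport fun y => fderiv ℝ ω (x - y) :=
    (hs.fderiv ℝ).comp_homeomorph (Homeomorph.subLeft x)
  have hint (k : Fin 3) :
      Integrable fun y => fderiv ℝ ω (x - y) (crossL (basis3 k) (newtonField y)) :=
    integrable_clm_apply_of_hasCompactSupport
      (T := fun y => (fderiv ℝ ω (x - y)).comp (crossL (basis3 k)))
      (locallyIntegrable_newtonField volume) (hDω.clm_comp continuous_const)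
      (hDωs.comp_left (g := fun T : ℝ³ →L[ℝ] ℝ³ => T.comp (crossL (basis3 k))) (by simp))
  have hint_coord (k : Fin 3) :
      Integrable fun y => fderiv ℝ ω (x - y) (crossL (basis3 k) (newtonField y)) k :=
    (EuclideanSpace.proj (𝕜 := ℝ) k).integrable_comp (hint k)
  have hzero (k : Fin 3) :
      ∫ y, fderiv ℝ ω (x - y) (crossL (basis3 k) (newtonField y)) k = 0 := by
    simpa [integral_fderiv_sub_crossL_newtonField_eq_zero hω hs] using
      (EuclideanSpace.proj (𝕜 := ℝ) k).integral_comp_comm (hint k)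
  rw [← divL_fderiv, clm_apply_fderiv_biotSavart hω hs]
  simp only [divL_crossL_comp, integral_neg]
  rw [integral_finsetSum _ fun k _ => hint_coord k]
  simp [hzero]

theorem curl3_biotSavart (hω : ContDiff ℝ 1 ω) (hs : HasCompactSupport ω) (x : ℝ³) :
    curl3 (biotSavart ω) x =
      ω x - (4 * π)⁻¹ • ∫ x', div3 ω x' • ((‖x - x'‖ ^ 3)⁻¹ • (x - x')) := by
  have hDω : Continuous fun y => fderiv ℝ ω (x - y) :=
    (hω.continuous_fderiv one_ne_zero).comp (continuous_const.sub continuous_id)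
  have hDωs : HasCompactSupport fun y => fderiv ℝ ω (x - y) :=
    (hs.fderiv ℝ).comp_homeomorph (Homeomorph.subLeft x)
  have hK := locallyIntegrable_newtonField (volume : Measure ℝ³)
  have hdiv : Integrable fun y => divL (fderiv ℝ ω (x - y)) • newtonField y :=
    hK.integrable_smul_left_of_hasCompactSupport (divL.continuous.comp hDω)
      (hDωs.comp_left (map_zero divL))
  have hdiv_eq : ∫ y, divL (fderiv ℝ ω (x - y)) • newtonField y =
      ∫ x', div3 ω x' • ((‖x - x'‖ ^ 3)⁻¹ • (x - x')) := by
    rw [← integral_sub_left_eq_self _ volume x]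
    simp only [sub_sub_cancel, divL_fderiv, newtonField, finrank_euclideanSpace_fin]
  rw [← curlL_fderiv, clm_apply_fderiv_biotSavart hω hs]
  simp only [curlL_crossL_comp]
  rw [integral_sub hdiv (integrable_clm_apply_of_hasCompactSupport hK hDω hDωs), hdiv_eq,
    integral_fderiv_sub_newtonField hω hs, neg_smul, smul_sub, inv_smul_smul₀ (by positivity),
    neg_sub]

theorem biot_savart_solves_curl_system_general {n : ℕ∞} (hn : 1 ≤ n) (ω : ℝ³ → ℝ³)
    (hω : ContDiff ℝ n ω) (hsupp : HasCompactSupport ω) (V : ℝ³ → ℝ³)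
    (hV : ∀ x, V x = (-(4 * π)⁻¹ : ℝ) •
      ∫ x' : ℝ³, (‖x - x'‖ ^ 3)⁻¹ • cross3 (x - x') (ω x')) :
    ContDiff ℝ n V ∧ (∀ x, div3 V x = 0) ∧
      ∀ x, curl3 V x = ω x - (4 * π)⁻¹ • ∫ x', div3 ω x' • ((‖x - x'‖ ^ 3)⁻¹ • (x - x')) := by
  have hω₁ : ContDiff ℝ 1 ω := hω.of_le (mod_cast hn)
  obtain rfl : V = biotSavart ω := funext fun x => (hV x).trans (biotSavart_apply ω x).symm
  exact ⟨contDiff_biotSavart hω hsupp, div3_biotSavart hω₁ hsupp, curl3_biotSavart hω₁ hsupp⟩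

end CrossProduct

/-- **The Biot–Savart field is a smooth divergence-free vector potential inverse of the curl.**
For a smooth, compactly supported, divergence-free `ω : ℝ³ → ℝ³`, the Biot–Savart field
`V(x) = -(1/4π) ∫ ((x - x′) × ω(x′))/‖x - x′‖³ dx′` is smooth, divergence-free, and
satisfies `∇ × V = ω` on `ℝ³`. -/
theorem biot_savart_solves_curl_system
    (ω : EuclideanSpace ℝ (Fin 3) → EuclideanSpace ℝ (Fin 3))
    (hω : ContDiff ℝ (⊤ : ℕ∞) ω) (hsupp : HasCompactSupport ω)
    (hdivω : ∀ x, div3 ω x = 0)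
    (V : EuclideanSpace ℝ (Fin 3) → EuclideanSpace ℝ (Fin 3))
    (hV : ∀ x, V x = (-(4 * π)⁻¹ : ℝ) •
      ∫ x' : EuclideanSpace ℝ (Fin 3), (‖x - x'‖ ^ 3)⁻¹ • cross3 (x - x') (ω x')) :
    ContDiff ℝ (⊤ : ℕ∞) V ∧ (∀ x, div3 V x = 0) ∧ (∀ x, curl3 V x = ω x) := by
  simpa [hdivω] using biot_savart_solves_curl_system_general le_top ω hω hsupp V hV
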